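/- As x → 0⁺, the quantity (f(x) − (Γ(1/4)²/(3√π))·x + 2x²)/x⁴ tends to 2/3. (Equivalently, f(x) = (Γ(1/4)²/(3√π))·x − 2x² + (2/3)x⁴ + o(x⁴) near 0.) -/

import Mathlib

/-!
The substitution `u = 1 / (1 + t ^ 4)` turns Euler's integral `B(1/4, 1/4)` into
`4 ∫₀^∞ dt / √(t ^ 4 + 1)`, so that the full integral equals `Γ(1/4)² / (4 √π)`
(`integral_Ioi_zero`). Hence `f x - (Γ(1/4)² / (3 √π)) x + 2 x ^ 2` only involves `√(x ^ 4 + 1)` and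
`∫₀ˣ dt / √(t ^ 4 + 1)`. The elementary bounds `1 ≤ √(x ^ 4 + 1) ≤ 1 + x ^ 4 / 2` and
`1 - t ^ 4 ≤ 1 / √(t ^ 4 + 1) ≤ 1` then show that the quotient by `x ^ 4` differs from `2 / 3`
by at most `2 x ^ 2`.
-/

open Real MeasureTheory Filter Topology

/-- The metric function `f` of the Einstein-Born-Infeld black hole:
`f(x) = (2/3)*(x^4 - x^2*sqrt(x^4+1)) + (4/3)*x*(integral of 1/sqrt(t^4+1) over (x,oo))`. -/
noncomputable def f (x : ℝ) : ℝ :=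
  (2 / 3) * (x ^ 4 - x ^ 2 * Real.sqrt (x ^ 4 + 1))
    + (4 / 3) * x * ∫ t in Set.Ioi x, 1 / Real.sqrt (t ^ 4 + 1)

/-- Euler's Beta integral at `(1/4, 1/4)` over the reals, evaluated with `Γ(1/2) = √π`. -/
lemma integral_beta_quarter :
    ∫ u in Set.Ioo (0 : ℝ) 1, u ^ (-(3 / 4) : ℝ) * (1 - u) ^ (-(3 / 4) : ℝ)
      = Real.Gamma (1 / 4) ^ 2 / Real.sqrt π := by
  have h := Complex.betaIntegral_eq_Gamma_mul_div ((1 / 4 : ℝ) : ℂ) ((1 / 4 : ℝ) : ℂ)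
    (by rw [Complex.ofReal_re]; norm_num) (by rw [Complex.ofReal_re]; norm_num)
  rw [← Complex.ofReal_add, Complex.Gamma_ofReal, Complex.Gamma_ofReal,
    show (1 / 4 + 1 / 4 : ℝ) = 1 / 2 by norm_num, Real.Gamma_one_half_eq,
    Complex.betaIntegral, intervalIntegral.integral_of_le zero_le_one,
    integral_Ioc_eq_integral_Ioo] at h
  have h2 : ∫ x in Set.Ioo (0 : ℝ) 1,
      (x : ℂ) ^ (((1 / 4 : ℝ) : ℂ) - 1) * (1 - (x : ℂ)) ^ (((1 / 4 : ℝ) : ℂ) - 1)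
      = ∫ x in Set.Ioo (0 : ℝ) 1,
        ((x ^ (-(3 / 4) : ℝ) * (1 - x) ^ (-(3 / 4) : ℝ) : ℝ) : ℂ) := by
    refine setIntegral_congr_fun measurableSet_Ioo fun x hx => ?_
    have e : (((1 / 4 : ℝ) : ℂ) - 1) = ((-(3 / 4) : ℝ) : ℂ) := by push_cast; norm_num
    simp only [e]
    rw [Complex.ofReal_mul, Complex.ofReal_cpow hx.1.le,
      Complex.ofReal_cpow (sub_nonneg.2 hx.2.le), Complex.ofReal_sub, Complex.ofReal_one]
  rw [h2, integral_complex_ofReal] at h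
  rw [sq]
  exact_mod_cast h

lemma image_Ioi_inv_one_add_pow_four :
    (fun t : ℝ => (1 + t ^ 4)⁻¹) '' Set.Ioi 0 = Set.Ioo 0 1 := by
  ext u
  constructor
  · rintro ⟨t, ht, rfl⟩
    have ht4 : 0 < t ^ 4 := pow_pos ht 4
    exact ⟨by positivity, inv_lt_one_of_one_lt₀ (by linarith)⟩
  · rintro ⟨h0, h1⟩
    have hp : 0 < u⁻¹ - 1 := sub_pos.2 ((one_lt_inv₀ h0).2 h1)
    refine ⟨(u⁻¹ - 1) ^ (1 / 4 : ℝ), Real.rpow_pos_of_pos hp _, ?_⟩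
    have : ((u⁻¹ - 1) ^ (1 / 4 : ℝ)) ^ 4 = u⁻¹ - 1 := by
      rw [← Real.rpow_natCast, ← Real.rpow_mul hp.le]
      norm_num
    simp only [this]
    simp

lemma injOn_inv_one_add_pow_four :
    Set.InjOn (fun t : ℝ => (1 + t ^ 4)⁻¹) (Set.Ioi 0) := by
  intro a ha b hb h
  have hpow : a ^ 4 = b ^ 4 := by simpa using h
  exact (pow_left_inj₀ (le_of_lt ha) (le_of_lt hb) (by norm_num)).1 hpow

/-- The Beta integrand pulled back along `u = 1 / (1 + t ^ 4)`, Jacobian included. -/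
lemma beta_pullback {t : ℝ} (ht : 0 < t) :
    |-(4 * t ^ 3) / (1 + t ^ 4) ^ 2| •
      (((1 + t ^ 4)⁻¹) ^ (-(3 / 4) : ℝ) * (1 - (1 + t ^ 4)⁻¹) ^ (-(3 / 4) : ℝ))
      = 4 * (1 / Real.sqrt (t ^ 4 + 1)) := by
  have hA : 0 < 1 + t ^ 4 := by positivity
  have h4 : (1 + t ^ 4) ^ 2 = Real.sqrt (1 + t ^ 4) ^ 4 := by
    rw [pow_mul (Real.sqrt _) 2 2, Real.sq_sqrt (by positivity)]
  have e1 : (1 + t ^ 4)⁻¹ * (1 - (1 + t ^ 4)⁻¹) = (t / Real.sqrt (1 + t ^ 4)) ^ (4 : ℝ) := by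
    rw [show (4 : ℝ) = (4 : ℕ) by norm_num, Real.rpow_natCast, div_pow, ← h4]
    field_simp
    ring
  have hs : 0 < Real.sqrt (1 + t ^ 4) := Real.sqrt_pos.2 hA
  have hsub : 0 ≤ 1 - (1 + t ^ 4)⁻¹ :=
    sub_nonneg.2 (inv_le_one_of_one_le₀ (by linarith [pow_pos ht 4]))
  rw [← Real.mul_rpow (by positivity) hsub, e1, ← Real.rpow_mul (by positivity),
    show (4 : ℝ) * -(3 / 4) = -((3 : ℕ) : ℝ) by norm_num, Real.rpow_neg (by positivity),
    Real.rpow_natCast, neg_div, abs_neg, abs_of_pos (by positivity), add_comm (t ^ 4) 1,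
    smul_eq_mul]
  rw [h4]
  field_simp

lemma integral_Ioi_zero :
    ∫ t in Set.Ioi (0 : ℝ), 1 / Real.sqrt (t ^ 4 + 1)
      = Real.Gamma (1 / 4) ^ 2 / (4 * Real.sqrt π) := by
  have hd : ∀ t ∈ Set.Ioi (0 : ℝ), HasDerivWithinAt (fun t : ℝ => (1 + t ^ 4)⁻¹)
      (-(4 * t ^ 3) / (1 + t ^ 4) ^ 2) (Set.Ioi 0) t := by
    intro t ht
    have hA : 1 + t ^ 4 ≠ 0 := by positivity
    have := ((hasDerivAt_pow 4 t).const_add 1).fun_inv hA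
    simpa using this.hasDerivWithinAt
  have h := integral_image_eq_integral_abs_deriv_smul measurableSet_Ioi hd
    injOn_inv_one_add_pow_four
    (fun u : ℝ => u ^ (-(3 / 4) : ℝ) * (1 - u) ^ (-(3 / 4) : ℝ))
  rw [image_Ioi_inv_one_add_pow_four, integral_beta_quarter,
    setIntegral_congr_fun measurableSet_Ioi (fun t ht => beta_pullback ht),
    integral_const_mul] at h
  rw [mul_comm 4 (Real.sqrt π), ← div_div, h]
  ring

/-- Integrability comes for free: a non-integrable function would have integral `0`, whereas
the integral is a positive Gamma value. -/
lemma integrableOn_Ioi_zero :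
    IntegrableOn (fun t : ℝ => 1 / Real.sqrt (t ^ 4 + 1)) (Set.Ioi 0) := by
  by_contra hn
  have h := integral_Ioi_zero
  rw [integral_undef hn] at h
  have : 0 < Real.Gamma (1 / 4) := Real.Gamma_pos_of_pos (by norm_num)
  have : 0 < Real.Gamma (1 / 4) ^ 2 / (4 * Real.sqrt π) := by positivity
  linarith

lemma integral_Ioi_eq {x : ℝ} (hx : 0 < x) :
    ∫ t in Set.Ioi x, 1 / Real.sqrt (t ^ 4 + 1)
      = Real.Gamma (1 / 4) ^ 2 / (4 * Real.sqrt π)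
        - ∫ t in (0 : ℝ)..x, 1 / Real.sqrt (t ^ 4 + 1) := by
  rw [← integral_Ioi_zero, intervalIntegral.integral_of_le hx.le,
    ← Set.Ioc_union_Ioi_eq_Ioi hx.le,
    setIntegral_union Set.Ioc_disjoint_Ioi_same measurableSet_Ioi
      (integrableOn_Ioi_zero.mono_set Set.Ioc_subset_Ioi_self)
      (integrableOn_Ioi_zero.mono_set (Set.Ioi_subset_Ioi hx.le))]
  ring

lemma integrand_bounds (t : ℝ) :
    1 - t ^ 4 ≤ 1 / Real.sqrt (t ^ 4 + 1) ∧ 1 / Real.sqrt (t ^ 4 + 1) ≤ 1 := by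
  have h4 : 0 ≤ t ^ 4 := by positivity
  have h1 : 1 ≤ Real.sqrt (t ^ 4 + 1) := Real.one_le_sqrt.2 (by linarith)
  have hs : Real.sqrt (t ^ 4 + 1) ^ 2 = t ^ 4 + 1 := Real.sq_sqrt (by linarith)
  refine ⟨?_, by rw [div_le_one (by linarith)]; exact h1⟩
  rw [le_div_iff₀ (by linarith)]
  nlinarith [mul_nonneg h4 (sub_nonneg.2 h1)]

lemma integral_bounds {x : ℝ} (hx : 0 < x) :
    x * (1 - x ^ 4) ≤ ∫ t in (0 : ℝ)..x, 1 / Real.sqrt (t ^ 4 + 1) ∧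
      ∫ t in (0 : ℝ)..x, 1 / Real.sqrt (t ^ 4 + 1) ≤ x := by
  have hi : IntervalIntegrable (fun t : ℝ => 1 / Real.sqrt (t ^ 4 + 1)) volume 0 x :=
    (intervalIntegrable_iff_integrableOn_Ioc_of_le hx.le).2
      (integrableOn_Ioi_zero.mono_set Set.Ioc_subset_Ioi_self)
  constructor
  · have := intervalIntegral.integral_mono_on hx.le
      (intervalIntegrable_const (c := 1 - x ^ 4)) hi (fun t ht => by
        have := pow_le_pow_left₀ ht.1 ht.2 4
        linarith [(integrand_bounds t).1])
    rwa [intervalIntegral.integral_const, sub_zero, smul_eq_mul] at this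
  · have := intervalIntegral.integral_mono_on hx.le hi
      (intervalIntegrable_const (c := (1 : ℝ))) (fun t _ => (integrand_bounds t).2)
    simpa using this

/-- Near `0` from the right, `f x = (Gamma(1/4)^2/(3*sqrt(pi))) * x - 2*x^2 + (2/3)*x^4 + o(x^4)`:
the quantity `(f x - (Gamma(1/4)^2/(3*sqrt(pi)))*x + 2*x^2)/x^4` tends to `2/3`. -/
theorem f_expansion_at_zero :
    Tendsto (fun x : ℝ =>
        (f x - (Real.Gamma (1 / 4) ^ 2 / (3 * Real.sqrt π)) * x + 2 * x ^ 2) / x ^ 4)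
      (𝓝[>] (0 : ℝ)) (𝓝 (2 / 3)) := by
  have hlo : Tendsto (fun x : ℝ => 2 / 3 - 2 * x ^ 2) (𝓝[>] 0) (𝓝 (2 / 3)) := by
    have : Continuous fun x : ℝ => 2 / 3 - 2 * x ^ 2 := by fun_prop
    simpa using (this.tendsto 0).mono_left nhdsWithin_le_nhds
  have hhi : Tendsto (fun x : ℝ => 2 / 3 + 2 * x ^ 2) (𝓝[>] 0) (𝓝 (2 / 3)) := by
    have : Continuous fun x : ℝ => 2 / 3 + 2 * x ^ 2 := by fun_prop
    simpa using (this.tendsto 0).mono_left nhdsWithin_le_nhds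
  have key : ∀ x : ℝ, 0 < x →
      f x - (Real.Gamma (1 / 4) ^ 2 / (3 * Real.sqrt π)) * x + 2 * x ^ 2
        = 2 / 3 * x ^ 4 - 2 / 3 * (x ^ 2 * (Real.sqrt (x ^ 4 + 1) - 1))
          + 4 / 3 * (x * (x - ∫ t in (0 : ℝ)..x, 1 / Real.sqrt (t ^ 4 + 1))) := by
    intro x hx
    have hpi : 0 < Real.sqrt π := Real.sqrt_pos.2 Real.pi_pos
    rw [f, integral_Ioi_eq hx]
    field_simp
    ring
  have hsqrt : ∀ x : ℝ, 1 ≤ Real.sqrt (x ^ 4 + 1) ∧ Real.sqrt (x ^ 4 + 1) ≤ 1 + x ^ 4 / 2 := by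
    intro x
    have h4 : 0 ≤ x ^ 4 := by positivity
    refine ⟨Real.one_le_sqrt.2 (by linarith), Real.sqrt_le_iff.2 ⟨by linarith, ?_⟩⟩
    nlinarith [sq_nonneg (x ^ 4)]
  refine tendsto_of_tendsto_of_tendsto_of_le_of_le' hlo hhi ?_ ?_ <;>
    filter_upwards [self_mem_nhdsWithin] with x hx
  all_goals
    have hx : 0 < x := hx
    obtain ⟨hI1, hI2⟩ := integral_bounds hx
    obtain ⟨hs1, hs2⟩ := hsqrt x
    have a1 := mul_le_mul_of_nonneg_left hs1 (sq_nonneg x)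
    have a2 := mul_le_mul_of_nonneg_left hs2 (sq_nonneg x)
    have b1 := mul_le_mul_of_nonneg_left hI1 hx.le
    have b2 := mul_le_mul_of_nonneg_left hI2 hx.le
    have h6 : 0 < x ^ 6 := by positivity
    rw [key x hx]
  · rw [le_div_iff₀ (by positivity)]
    nlinarith
  · rw [div_le_iff₀ (by positivity)]
    nlinarith
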